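/- arXiv:1301.5206 — 2 statements merged into one kernel-verified Lean document; each statement's English description precedes it below -/
import Mathlib

section
/- Let C be an abelian category and (A, B) a complete hereditary cotorsion pair in C. Then: (a) Ext¹_{Ch(C)}(X, Y) = 0 for every X ∈ Ã and Y ∈ B̃, i.e., every short exact sequence of cochain complexes 0 → Y → E → X → 0 with X ∈ Ã and Y ∈ B̃ splits; and (b) every acyclic cochain complex W over C admits short exact sequences of complexes 0 → W → B_W → A_W → 0 and 0 → B^W → A^W → W → 0 with A_W, A^W ∈ Ã and B_W, B^W ∈ B̃. -/
open CategoryTheory CategoryTheory.Limits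

universe w v u

variable {𝒜 : Type u} [Category.{v} 𝒜] [Abelian 𝒜]

/-- `Ext¹(A, B) = 0`, phrased as: every short exact sequence `0 → B → E → A → 0`
splits. -/
def Ext1Zero {C : Type*} [Category C] [Abelian C] (A B : C) : Prop :=
  ∀ (E : C) (i : B ⟶ E) (p : E ⟶ A) (w : i ≫ p = 0),
    (ShortComplex.mk i p w).ShortExact → ∃ s : A ⟶ E, s ≫ p = 𝟙 A

/-- The right `Ext¹`-orthogonal class `S^⊥` of a class of objects `S`. -/
def rightPerp {C : Type*} [Category C] [Abelian C] (S : Set C) : Set C :=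
  {B | ∀ A ∈ S, Ext1Zero A B}

/-- The left `Ext¹`-orthogonal class `⊥S` of a class of objects `S`. -/
def leftPerp {C : Type*} [Category C] [Abelian C] (S : Set C) : Set C :=
  {A | ∀ B ∈ S, Ext1Zero A B}

/-- `(𝓐, 𝓑)` is a cotorsion pair: `𝓐 = ⊥𝓑` and `𝓑 = 𝓐^⊥`. -/
structure IsCotorsionPair {C : Type*} [Category C] [Abelian C] (𝓐 𝓑 : Set C) : Prop where
  left_eq : 𝓐 = leftPerp 𝓑
  right_eq : 𝓑 = rightPerp 𝓐

/-- `(𝓐, 𝓑)` is a complete cotorsion pair: a cotorsion pair admitting approximation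
sequences `0 → X → B_X → A_X → 0` and `0 → B^X → A^X → X → 0` for every object `X`. -/
structure IsCompleteCotorsionPair {C : Type*} [Category C] [Abelian C] (𝓐 𝓑 : Set C)
    extends IsCotorsionPair 𝓐 𝓑 : Prop where
  approx₁ : ∀ X : C, ∃ (B A : C) (i : X ⟶ B) (p : B ⟶ A) (w : i ≫ p = 0),
    (ShortComplex.mk i p w).ShortExact ∧ B ∈ 𝓑 ∧ A ∈ 𝓐
  approx₂ : ∀ X : C, ∃ (B A : C) (i : B ⟶ A) (p : A ⟶ X) (w : i ≫ p = 0),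
    (ShortComplex.mk i p w).ShortExact ∧ B ∈ 𝓑 ∧ A ∈ 𝓐

/-- `(𝓐, 𝓑)` is a hereditary pair: `Extⁿ(A, B) = 0` for all `A ∈ 𝓐`, `B ∈ 𝓑`, `n ≥ 1`. -/
def IsHereditary {C : Type u} [Category.{v} C] [Abelian C] [HasExt.{w} C]
    (𝓐 𝓑 : Set C) : Prop :=
  ∀ A ∈ 𝓐, ∀ B ∈ 𝓑, ∀ n : ℕ, 1 ≤ n → Subsingleton (Abelian.Ext A B n)

/-- The class `Ã` of acyclic cochain complexes all of whose components and cycle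
objects `Zⁿ(X) = ker(Xⁿ → X^{n+1})` lie in `𝓐`. -/
def Tilde (𝓐 : Set 𝒜) : Set (CochainComplex 𝒜 ℤ) :=
  {X | (∀ n : ℤ, X.ExactAt n) ∧ (∀ n : ℤ, X.X n ∈ 𝓐) ∧ (∀ n : ℤ, X.cycles n ∈ 𝓐)}

section Helpers

open Abelian

lemma exists_lift_of_ext {X : 𝒜} [HasExt.{w} 𝒜] {S : ShortComplex 𝒜} (hS : S.ShortExact)
    (x : X ⟶ S.X₃) (h : (Ext.mk₀ x).comp hS.extClass (zero_add 1) = 0) :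
    ∃ y : X ⟶ S.X₂, y ≫ S.g = x := by
  obtain ⟨y, hy⟩ := Ext.covariant_sequence_exact₃ X hS (Ext.mk₀ x) (zero_add 1) h
  obtain ⟨y, rfl⟩ := Ext.addEquiv₀.symm.surjective y
  refine ⟨y, ?_⟩
  apply Ext.addEquiv₀.symm.injective
  simpa using hy

lemma exists_ext_of_ext {Y : 𝒜} [HasExt.{w} 𝒜] {S : ShortComplex 𝒜} (hS : S.ShortExact)
    (x : S.X₁ ⟶ Y) (h : hS.extClass.comp (Ext.mk₀ x) (add_zero 1) = 0) :
    ∃ y : S.X₂ ⟶ Y, S.f ≫ y = x := by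
  obtain ⟨y, hy⟩ := Ext.contravariant_sequence_exact₁ hS Y (Ext.mk₀ x) (add_zero 1) h
  obtain ⟨y, rfl⟩ := Ext.addEquiv₀.symm.surjective y
  refine ⟨y, ?_⟩
  apply Ext.addEquiv₀.symm.injective
  simpa using hy

lemma ext1Zero_of_subsingleton [HasExt.{w} 𝒜] {A B : 𝒜} (h : Subsingleton (Ext A B 1)) :
    Ext1Zero A B := by
  intro E i p w hS
  exact exists_lift_of_ext hS (𝟙 A) (Subsingleton.elim (α := Ext A B 1) _ _)

lemma shortExact_pushout {X Y Z E : 𝒜} (i : X ⟶ E) (p : E ⟶ Z) (w : i ≫ p = 0)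
    (hS : (ShortComplex.mk i p w).ShortExact) (φ : X ⟶ Y) :
    ∃ (E' : 𝒜) (i' : Y ⟶ E') (p' : E' ⟶ Z) (w' : i' ≫ p' = 0) (q : E ⟶ E'),
      (ShortComplex.mk i' p' w').ShortExact ∧ i ≫ q = φ ≫ i' ∧ q ≫ p' = p := by
  have : Mono i := hS.mono_f
  have : Epi p := hS.epi_g
  obtain ⟨r, hr1, hr2⟩ : ∃ r : pushout i φ ⟶ Z, pushout.inl i φ ≫ r = p ∧
      pushout.inr i φ ≫ r = 0 :=
    ⟨pushout.desc p 0 (by rw [w, comp_zero]), pushout.inl_desc _ _ _, pushout.inr_desc _ _ _⟩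
  refine ⟨pushout i φ, pushout.inr i φ, r, hr2, pushout.inl i φ, ?_, pushout.condition, hr1⟩
  have hepi : Epi r := epi_of_epi_fac hr1
  refine ShortComplex.ShortExact.mk' ?_ (by dsimp; infer_instance) hepi
  apply ShortComplex.exact_of_g_is_cokernel
  refine CokernelCofork.IsColimit.ofπ' _ _ (fun {W} k hk => ?_)
  dsimp at k hk ⊢
  have hk' : i ≫ pushout.inl i φ ≫ k = 0 := by
    rw [← Category.assoc, pushout.condition, Category.assoc, hk, comp_zero]
  refine ⟨hS.exact.desc (pushout.inl i φ ≫ k) hk', ?_⟩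
  have := hS.exact.g_desc (pushout.inl i φ ≫ k) hk'
  dsimp at this
  apply pushout.hom_ext
  · rw [← Category.assoc, hr1, this]
  · rw [← Category.assoc, hr2, hk, zero_comp]

lemma shortExact_pullback {X Y Z E : 𝒜} (i : X ⟶ E) (p : E ⟶ Z) (w : i ≫ p = 0)
    (hS : (ShortComplex.mk i p w).ShortExact) (φ : Y ⟶ Z) :
    ∃ (E' : 𝒜) (i' : X ⟶ E') (p' : E' ⟶ Y) (w' : i' ≫ p' = 0) (q : E' ⟶ E),
      (ShortComplex.mk i' p' w').ShortExact ∧ q ≫ p = p' ≫ φ ∧ i' ≫ q = i := by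
  obtain ⟨E', i', p', w', q, h, h1, h2⟩ := shortExact_pushout (𝒜 := 𝒜ᵒᵖ) p.op i.op
    (by rw [← op_comp, w, op_zero]) hS.op φ.op
  exact ⟨E'.unop, p'.unop, i'.unop, by rw [← unop_comp, w', unop_zero], q.unop, h.unop,
    Quiver.Hom.op_inj h1, Quiver.Hom.op_inj h2⟩

lemma realize_of_epi [HasExt.{w} 𝒜] {X Y P : 𝒜} (x : Ext X Y 1) (g : P ⟶ X) [Epi g]
    (h : (Ext.mk₀ g).comp x (zero_add 1) = 0) :
    ∃ (E : 𝒜) (i : Y ⟶ E) (p : E ⟶ X) (w : i ≫ p = 0)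
      (hS : (ShortComplex.mk i p w).ShortExact), hS.extClass = x := by
  have hK : (ShortComplex.mk (kernel.ι g) g (kernel.condition g)).ShortExact :=
    ShortComplex.ShortExact.mk' (ShortComplex.exact_kernel g)
      (by dsimp; infer_instance) (by dsimp; infer_instance)
  obtain ⟨y, hy⟩ := Ext.contravariant_sequence_exact₃ hK Y x h (add_zero 1)
  obtain ⟨y, rfl⟩ := Ext.addEquiv₀.symm.surjective y
  obtain ⟨E', i', p', w', q, hS, h1, h2⟩ := shortExact_pushout _ _ _ hK y
  refine ⟨E', i', p', w', hS, ?_⟩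
  have := ShortComplex.ShortExact.extClass_naturality hK hS
    { τ₁ := y, τ₂ := q, τ₃ := 𝟙 X, comm₁₂ := h1.symm, comm₂₃ := by simpa using h2 }
  dsimp at this
  rw [Ext.mk₀_id_comp] at this
  rw [← this]; exact hy

lemma realize_of_mono [HasExt.{w} 𝒜] {X Y P : 𝒜} (x : Ext X Y 1) (f : Y ⟶ P) [Mono f]
    (h : x.comp (Ext.mk₀ f) (add_zero 1) = 0) :
    ∃ (E : 𝒜) (i : Y ⟶ E) (p : E ⟶ X) (w : i ≫ p = 0)
      (hS : (ShortComplex.mk i p w).ShortExact), hS.extClass = x := by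
  have hK : (ShortComplex.mk f (cokernel.π f) (cokernel.condition f)).ShortExact :=
    ShortComplex.ShortExact.mk' (ShortComplex.exact_cokernel f)
      (by dsimp; infer_instance) (by dsimp; infer_instance)
  obtain ⟨y, hy⟩ := Ext.covariant_sequence_exact₁ X hK x h (zero_add 1)
  obtain ⟨y, rfl⟩ := Ext.addEquiv₀.symm.surjective y
  obtain ⟨E', i', p', w', q, hS, h1, h2⟩ := shortExact_pullback _ _ _ hK y
  refine ⟨E', i', p', w', hS, ?_⟩
  have := ShortComplex.ShortExact.extClass_naturality hS hK
    { τ₁ := 𝟙 Y, τ₂ := q, τ₃ := y, comm₁₂ := by simpa using h2.symm, comm₂₃ := h1 }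
  dsimp at this
  rw [Ext.comp_mk₀_id] at this
  rw [this]; exact hy

lemma exists_hom_of_extClass [HasExt.{w} 𝒜] {S T : ShortComplex 𝒜} (hS : S.ShortExact)
    (hT : T.ShortExact) (α : S.X₁ ⟶ T.X₁) (γ : S.X₃ ⟶ T.X₃)
    (h : hS.extClass.comp (Ext.mk₀ α) (add_zero 1) =
      (Ext.mk₀ γ).comp hT.extClass (zero_add 1)) :
    ∃ β : S.X₂ ⟶ T.X₂, S.f ≫ β = α ≫ T.f ∧ β ≫ T.g = S.g ≫ γ := by
  have := hS.epi_g
  obtain ⟨β, hβ⟩ := exists_ext_of_ext hS (α ≫ T.f) (by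
    rw [← Ext.mk₀_comp_mk₀, ← Ext.comp_assoc_of_third_deg_zero, h, Ext.comp_assoc_of_third_deg_zero,
      hT.extClass_comp, Ext.comp_zero])
  obtain ⟨δ, hδ⟩ : ∃ δ : S.X₃ ⟶ T.X₃, S.g ≫ δ = β ≫ T.g :=
    ⟨hS.exact.desc (β ≫ T.g) (by rw [← Category.assoc, hβ]; simp), hS.exact.g_desc _ _⟩
  have hn := ShortComplex.ShortExact.extClass_naturality hS hT
    { τ₁ := α, τ₂ := β, τ₃ := δ, comm₁₂ := hβ.symm, comm₂₃ := hδ.symm }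
  dsimp at hn
  obtain ⟨ε, hε⟩ := exists_lift_of_ext hT (γ - δ) (by
    rw [sub_eq_add_neg, Ext.mk₀_add, Ext.mk₀_neg, Ext.add_comp, Ext.neg_comp, ← h, ← hn, add_neg_cancel])
  refine ⟨β + S.g ≫ ε, by simp [hβ], ?_⟩
  rw [Preadditive.add_comp, Category.assoc, hε, ← hδ, ← Preadditive.comp_add]
  simp

end Helpers

section Complexes

lemma epi_toCycles_of_exactAt (K : CochainComplex 𝒜 ℤ) (h : ∀ n, K.ExactAt n) (n : ℤ) :
    Epi (K.toCycles n (n + 1)) := by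
  have hz := (K.exactAt_iff_isZero_homology (n + 1)).1 (h (n + 1))
  rw [Preadditive.epi_iff_cancel_zero]
  intro Z k hk
  have hc := K.homologyIsCokernel n (n + 1) (by simp)
  obtain ⟨l, hl⟩ := CokernelCofork.IsColimit.desc' hc k hk
  rw [← hl]
  have : K.homologyπ (n + 1) = 0 := hz.eq_of_tgt _ _
  dsimp
  rw [this, zero_comp]

lemma iCycles_toCycles_zero (K : CochainComplex 𝒜 ℤ) (n : ℤ) :
    K.iCycles n ≫ K.toCycles n (n + 1) = 0 := by
  rw [← cancel_mono (K.iCycles (n + 1))]; simp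

lemma shortExact_cycles (K : CochainComplex 𝒜 ℤ) (h : ∀ n, K.ExactAt n) (n : ℤ) :
    (ShortComplex.mk (K.iCycles n) (K.toCycles n (n + 1))
      (iCycles_toCycles_zero K n)).ShortExact := by
  refine ShortComplex.ShortExact.mk' ?_ (by dsimp; infer_instance) (epi_toCycles_of_exactAt K h n)
  apply ShortComplex.exact_of_f_is_kernel
  refine KernelFork.IsLimit.ofι' _ _ (fun {A} k hk => ?_)
  dsimp at k hk ⊢
  refine ⟨K.liftCycles k (n + 1) (by simp) ?_, K.liftCycles_i _ _ _ _⟩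
  rw [← K.toCycles_i, ← Category.assoc, hk, zero_comp]

lemma shortExact_cyclesMap {S : ShortComplex (CochainComplex 𝒜 ℤ)} (hS : S.ShortExact)
    (h : ∀ n, S.X₃.ExactAt n) (n : ℤ) :
    (ShortComplex.mk (HomologicalComplex.cyclesMap S.f n) (HomologicalComplex.cyclesMap S.g n)
      (by rw [← HomologicalComplex.cyclesMap_comp, S.zero,
        HomologicalComplex.cyclesMap_zero])).ShortExact := by
  have := hS.mono_f
  have := hS.epi_g
  refine ShortComplex.ShortExact.mk'
    (HomologicalComplex.cycles_left_exact S hS.exact n) (by dsimp; infer_instance) ?_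
  dsimp
  obtain ⟨m, rfl⟩ : ∃ m, m + 1 = n := ⟨n - 1, by ring⟩
  have := epi_toCycles_of_exactAt _ h m
  have h1 : Epi (S.g.f m ≫ S.X₃.toCycles m (m + 1)) := epi_comp _ _
  have h2 : S.X₂.toCycles m (m + 1) ≫ HomologicalComplex.cyclesMap S.g (m + 1) =
      S.g.f m ≫ S.X₃.toCycles m (m + 1) := by
    rw [← cancel_mono (S.X₃.iCycles (m + 1))]; simp
  exact epi_of_epi_fac h2

lemma exactAt_X₁ {S : ShortComplex (CochainComplex 𝒜 ℤ)} (hS : S.ShortExact)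
    (h₂ : ∀ n, S.X₂.ExactAt n) (h₃ : ∀ n, S.X₃.ExactAt n) (n : ℤ) : S.X₁.ExactAt n := by
  simp only [HomologicalComplex.exactAt_iff_isZero_homology] at *
  exact (hS.homology_exact₁ (n - 1) n (by simp)).isZero_X₂ ((h₃ _).eq_of_src _ _)
    ((h₂ _).eq_of_tgt _ _)

lemma exactAt_X₃ {S : ShortComplex (CochainComplex 𝒜 ℤ)} (hS : S.ShortExact)
    (h₁ : ∀ n, S.X₁.ExactAt n) (h₂ : ∀ n, S.X₂.ExactAt n) (n : ℤ) : S.X₃.ExactAt n := by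
  simp only [HomologicalComplex.exactAt_iff_isZero_homology] at *
  exact (hS.homology_exact₃ n (n + 1) (by simp)).isZero_X₂ ((h₂ _).eq_of_src _ _)
    ((h₁ _).eq_of_tgt _ _)

lemma exact_congr {X Y Z : 𝒜} {f f' : X ⟶ Y} {g g' : Y ⟶ Z} {w : f ≫ g = 0} {w' : f' ≫ g' = 0}
    (hf : f = f') (hg : g = g') (h : (ShortComplex.mk f g w).Exact) :
    (ShortComplex.mk f' g' w').Exact := by
  subst hf hg; exact h

/-- A family of composable short exact sequences, to be spliced. -/
structure SplicingData (𝒜 : Type u) [Category.{v} 𝒜] [Abelian 𝒜] where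
  B : ℤ → 𝒜
  Q : ℤ → 𝒜
  f : ∀ n, B n ⟶ Q n
  g : ∀ n, Q n ⟶ B (n + 1)
  w : ∀ n, f n ≫ g n = 0
  h : ∀ n, (ShortComplex.mk (f n) (g n) (w n)).ShortExact

namespace SplicingData

variable (D : SplicingData 𝒜)

/-- The spliced complex. -/
noncomputable def cpx : CochainComplex 𝒜 ℤ :=
  CochainComplex.of D.Q (fun n => D.g n ≫ D.f (n + 1))
    (fun n => by simp [reassoc_of% (D.w (n + 1))])

lemma cpx_d (n : ℤ) : D.cpx.d n (n + 1) =
    (D.g n ≫ D.f (n + 1) : D.Q n ⟶ D.Q (n + 1)) :=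
  CochainComplex.of_d D.Q (fun n => D.g n ≫ D.f (n + 1)) n

lemma mono_f (n : ℤ) : Mono (D.f n) := (D.h n).mono_f

lemma epi_g (n : ℤ) : Epi (D.g n) := (D.h n).epi_g

lemma exactAt (n : ℤ) : D.cpx.ExactAt n := by
  obtain ⟨m, rfl⟩ : ∃ m, m + 1 = n := ⟨n - 1, by ring⟩
  rw [D.cpx.exactAt_iff' m (m + 1) (m + 1 + 1) (by simp) (by simp)]
  have := D.epi_g m
  have := D.mono_f (m + 1 + 1)
  let S₁ : ShortComplex 𝒜 := ShortComplex.mk (D.g m ≫ D.f (m + 1)) (D.g (m + 1))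
    (by simp [D.w])
  let φ : S₁ ⟶ ShortComplex.mk (D.f (m + 1)) (D.g (m + 1)) (D.w _) :=
    { τ₁ := D.g m, τ₂ := 𝟙 _, τ₃ := 𝟙 _ , comm₁₂ := by simp [S₁], comm₂₃ := by simp [S₁] }
  let S₂ : ShortComplex 𝒜 := ShortComplex.mk (D.g m ≫ D.f (m + 1))
    (D.g (m + 1) ≫ D.f (m + 1 + 1)) (by simp [reassoc_of% (D.w (m + 1))])
  let ψ : S₁ ⟶ S₂ :=
    { τ₁ := 𝟙 _, τ₂ := 𝟙 _, τ₃ := D.f (m + 1 + 1)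
      comm₁₂ := by simp [S₁, S₂]
      comm₂₃ := by simp [S₁, S₂] }
  have : Epi φ.τ₁ := by dsimp [φ]; infer_instance
  have : IsIso φ.τ₂ := by dsimp [φ]; infer_instance
  have : Mono φ.τ₃ := by dsimp [φ]; infer_instance
  have : Epi ψ.τ₁ := by dsimp [ψ]; infer_instance
  have : IsIso ψ.τ₂ := by dsimp [ψ]; infer_instance
  have : Mono ψ.τ₃ := by dsimp [ψ]; infer_instance
  have key : S₂.Exact := by
    rw [← ShortComplex.exact_iff_of_epi_of_isIso_of_mono ψ,
      ShortComplex.exact_iff_of_epi_of_isIso_of_mono φ]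
    exact (D.h (m + 1)).exact
  exact exact_congr (D.cpx_d m).symm (D.cpx_d (m + 1)).symm key

/-- The cycles of the spliced complex. -/
lemma exists_iso (n : ℤ) : ∃ e : D.B n ≅ D.cpx.cycles n,
    e.hom ≫ D.cpx.iCycles n = (D.f n : D.B n ⟶ D.Q n) := by
  have := D.mono_f n
  have := D.mono_f (n + 1)
  have h1 : (D.f n : D.B n ⟶ D.cpx.X n) ≫ D.cpx.d n (n + 1) = 0 := by
    rw [cpx_d]
    have := D.w n
    exact (Category.assoc _ _ _).symm.trans
      ((congrArg (fun t => t ≫ D.f (n + 1)) this).trans zero_comp)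
  let i : D.cpx.cycles n ⟶ D.Q n := D.cpx.iCycles n
  have h2 : i ≫ D.g n = 0 := by
    rw [← cancel_mono (D.f (n + 1)), Category.assoc, zero_comp]
    have := D.cpx.iCycles_d n (n + 1)
    rw [cpx_d] at this
    exact this
  have h3 : D.cpx.liftCycles (D.f n : D.B n ⟶ D.cpx.X n) (n + 1) (by simp) h1 ≫ i = D.f n :=
    D.cpx.liftCycles_i _ _ _ _
  have h4 : (D.h n).exact.lift i h2 ≫ D.f n = i := (D.h n).exact.lift_f i h2
  refine ⟨⟨D.cpx.liftCycles (D.f n : D.B n ⟶ D.cpx.X n) (n + 1) (by simp) h1,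
    (D.h n).exact.lift i h2, ?_, ?_⟩, h3⟩
  · rw [← cancel_mono (D.f n), Category.assoc, Category.id_comp]
    rw [h4, h3]
  · have : Mono i := inferInstanceAs (Mono (D.cpx.iCycles n))
    rw [← cancel_mono i, Category.assoc, Category.id_comp, h3, h4]

lemma exists_homTo (W : CochainComplex 𝒜 ℤ) (b : ∀ n, W.cycles n ⟶ D.B n)
    (β : ∀ n, W.X n ⟶ D.Q n) (h1 : ∀ n, W.iCycles n ≫ β n = b n ≫ D.f n)
    (h2 : ∀ n, β n ≫ D.g n = W.toCycles n (n + 1) ≫ b (n + 1)) :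
    ∃ φ : W ⟶ D.cpx, ∀ n, φ.f n = (β n : W.X n ⟶ D.Q n) := by
  refine ⟨CochainComplex.ofHom (Y := D.cpx) β (fun n => ?_), fun n => rfl⟩
  rw [cpx_d, ← W.toCycles_i]
  refine Eq.trans ?_ (Category.assoc _ _ _).symm
  refine Eq.trans ?_ (congrArg (fun t => W.toCycles n (n + 1) ≫ t) (h1 (n + 1)).symm)
  refine (Category.assoc _ _ _).symm.trans ?_
  refine Eq.trans (congrArg (fun t => t ≫ D.f (n + 1)) (h2 n)) ?_
  exact Category.assoc _ _ _

lemma exists_homFrom (W : CochainComplex 𝒜 ℤ) (a : ∀ n, D.B n ⟶ W.cycles n)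
    (β : ∀ n, D.Q n ⟶ W.X n) (h1 : ∀ n, D.f n ≫ β n = a n ≫ W.iCycles n)
    (h2 : ∀ n, β n ≫ W.toCycles n (n + 1) = D.g n ≫ a (n + 1)) :
    ∃ φ : D.cpx ⟶ W, ∀ n, φ.f n = (β n : D.Q n ⟶ W.X n) := by
  refine ⟨CochainComplex.ofHom (X := D.cpx) β (fun n => ?_), fun n => rfl⟩
  rw [cpx_d, ← W.toCycles_i]
  refine (Category.assoc _ _ _).symm.trans ?_
  refine Eq.trans (congrArg (fun t => t ≫ W.iCycles (n + 1)) (h2 n)) ?_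
  refine (Category.assoc _ _ _).trans ?_
  refine Eq.trans (congrArg (fun t => D.g n ≫ t) (h1 (n + 1)).symm) ?_
  exact (Category.assoc _ _ _).symm

end SplicingData

lemma nonempty_iso_X₃ {X Y Z Y' Z' : 𝒜} {f : X ⟶ Y} {g : Y ⟶ Z} {w : f ≫ g = 0}
    (h : (ShortComplex.mk f g w).ShortExact) {f' : X ⟶ Y'} {g' : Y' ⟶ Z'} {w' : f' ≫ g' = 0}
    (h' : (ShortComplex.mk f' g' w').ShortExact) (e : Y ≅ Y') (he : f ≫ e.hom = f') :
    Nonempty (Z ≅ Z') := by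
  have : Epi g := h.epi_g
  have : Epi g' := h'.epi_g
  obtain ⟨u, hu⟩ := h.exact.desc' (e.hom ≫ g') (by dsimp; rw [← Category.assoc, he, w'])
  obtain ⟨v, hv⟩ := h'.exact.desc' (e.inv ≫ g) (by
    have : f' ≫ e.inv = f := by rw [← he]; simp
    dsimp; rw [← Category.assoc, this, w])
  dsimp at u hu v hv
  refine ⟨⟨u, v, ?_, ?_⟩⟩
  · rw [← cancel_epi g, reassoc_of% hu, hv]; simp
  · rw [← cancel_epi g', reassoc_of% hv, hu]; simp

lemma nonempty_iso_X₁ {X X' Y Z Y' : 𝒜} {f : X ⟶ Y} {g : Y ⟶ Z} {w : f ≫ g = 0}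
    (h : (ShortComplex.mk f g w).ShortExact) {f' : X' ⟶ Y'} {g' : Y' ⟶ Z} {w' : f' ≫ g' = 0}
    (h' : (ShortComplex.mk f' g' w').ShortExact) (e : Y ≅ Y') (he : e.hom ≫ g' = g) :
    Nonempty (X ≅ X') := by
  have : Mono f := h.mono_f
  have : Mono f' := h'.mono_f
  obtain ⟨u, hu⟩ := h'.exact.lift' (f ≫ e.hom) (by dsimp; rw [Category.assoc, he, w])
  obtain ⟨v, hv⟩ := h.exact.lift' (f' ≫ e.inv) (by
    have : e.inv ≫ g = g' := by rw [← he]; simp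
    dsimp; rw [Category.assoc, this, w'])
  dsimp at u hu v hv
  refine ⟨⟨u, v, ?_, ?_⟩⟩
  · rw [← cancel_mono f, Category.assoc, hv, reassoc_of% hu]; simp
  · rw [← cancel_mono f', Category.assoc, hu, reassoc_of% hv]; simp

end Complexes

section Cotorsion

open Abelian

variable [HasExt.{w} 𝒜] {𝓐 𝓑 : Set 𝒜}

lemma subsingleton_of_iso_left {A A' B : 𝒜} (e : A ≅ A') (h : Subsingleton (Ext A B 1)) :
    Subsingleton (Ext A' B 1) := by
  refine subsingleton_of_forall_eq 0 (fun x => ?_)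
  have h1 : (Ext.mk₀ e.hom).comp x (zero_add 1) = 0 := Subsingleton.elim _ _
  have h2 := congrArg (fun t => (Ext.mk₀ e.inv).comp t (zero_add 1)) h1
  simpa using h2

lemma subsingleton_of_iso_right {A B B' : 𝒜} (e : B ≅ B') (h : Subsingleton (Ext A B 1)) :
    Subsingleton (Ext A B' 1) := by
  refine subsingleton_of_forall_eq 0 (fun x => ?_)
  have h1 : x.comp (Ext.mk₀ e.inv) (add_zero 1) = 0 := Subsingleton.elim _ _
  have h2 := congrArg (fun t => Ext.comp t (Ext.mk₀ e.hom) (add_zero 1)) h1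
  simpa using h2

lemma mem_left (hp : IsCompleteCotorsionPair 𝓐 𝓑) {A : 𝒜}
    (h : ∀ B ∈ 𝓑, Subsingleton (Ext A B 1)) : A ∈ 𝓐 := by
  rw [hp.left_eq]
  exact fun B hB => ext1Zero_of_subsingleton (h B hB)

lemma mem_right (hp : IsCompleteCotorsionPair 𝓐 𝓑) {B : 𝒜}
    (h : ∀ A ∈ 𝓐, Subsingleton (Ext A B 1)) : B ∈ 𝓑 := by
  rw [hp.right_eq]
  exact fun A hA => ext1Zero_of_subsingleton (h A hA)

lemma mem_left_iso (hp : IsCompleteCotorsionPair 𝓐 𝓑) (hh : IsHereditary.{w} 𝓐 𝓑) {A A' : 𝒜}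
    (e : A ≅ A') (hA : A ∈ 𝓐) : A' ∈ 𝓐 :=
  mem_left hp (fun B hB => subsingleton_of_iso_left e (hh A hA B hB 1 le_rfl))

lemma mem_right_iso (hp : IsCompleteCotorsionPair 𝓐 𝓑) (hh : IsHereditary.{w} 𝓐 𝓑) {B B' : 𝒜}
    (e : B ≅ B') (hB : B ∈ 𝓑) : B' ∈ 𝓑 :=
  mem_right hp (fun A hA => subsingleton_of_iso_right e (hh A hA B hB 1 le_rfl))

lemma mem_left_ext (hp : IsCompleteCotorsionPair 𝓐 𝓑) (hh : IsHereditary.{w} 𝓐 𝓑)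
    {S : ShortComplex 𝒜} (hS : S.ShortExact) (h1 : S.X₁ ∈ 𝓐) (h3 : S.X₃ ∈ 𝓐) : S.X₂ ∈ 𝓐 := by
  refine mem_left hp (fun B hB => subsingleton_of_forall_eq 0 (fun x => ?_))
  have := hh _ h1 B hB 1 le_rfl
  have := hh _ h3 B hB 1 le_rfl
  obtain ⟨y, rfl⟩ := Ext.contravariant_sequence_exact₂ hS B x (Subsingleton.elim _ _)
  rw [Subsingleton.elim y 0, Ext.comp_zero]

lemma mem_right_ext (hp : IsCompleteCotorsionPair 𝓐 𝓑) (hh : IsHereditary.{w} 𝓐 𝓑)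
    {S : ShortComplex 𝒜} (hS : S.ShortExact) (h1 : S.X₁ ∈ 𝓑) (h3 : S.X₃ ∈ 𝓑) : S.X₂ ∈ 𝓑 := by
  refine mem_right hp (fun A hA => subsingleton_of_forall_eq 0 (fun x => ?_))
  have := hh A hA _ h1 1 le_rfl
  have := hh A hA _ h3 1 le_rfl
  obtain ⟨y, rfl⟩ := Ext.covariant_sequence_exact₂ A hS x (Subsingleton.elim _ _)
  rw [Subsingleton.elim y 0, Ext.zero_comp]

lemma tilde_left (hp : IsCompleteCotorsionPair 𝓐 𝓑) (hh : IsHereditary.{w} 𝓐 𝓑)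
    {K : CochainComplex 𝒜 ℤ} (hK : ∀ n, K.ExactAt n) (h : ∀ n, K.cycles n ∈ 𝓐) : K ∈ Tilde 𝓐 :=
  ⟨hK, fun n => mem_left_ext hp hh (shortExact_cycles K hK n) (h n) (h (n + 1)), h⟩

lemma tilde_right (hp : IsCompleteCotorsionPair 𝓐 𝓑) (hh : IsHereditary.{w} 𝓐 𝓑)
    {K : CochainComplex 𝒜 ℤ} (hK : ∀ n, K.ExactAt n) (h : ∀ n, K.cycles n ∈ 𝓑) : K ∈ Tilde 𝓑 :=
  ⟨hK, fun n => mem_right_ext hp hh (shortExact_cycles K hK n) (h n) (h (n + 1)), h⟩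

lemma horseshoe_right (hp : IsCompleteCotorsionPair 𝓐 𝓑) (hh : IsHereditary.{w} 𝓐 𝓑)
    {S : ShortComplex 𝒜} (hS : S.ShortExact) {B B' A' : 𝒜} (hB : B ∈ 𝓑) (hA' : A' ∈ 𝓐)
    (b : S.X₁ ⟶ B) (b' : S.X₃ ⟶ B') (q : B' ⟶ A') (w : b' ≫ q = 0)
    (hN : (ShortComplex.mk b' q w).ShortExact) :
    ∃ (Q : 𝒜) (f : B ⟶ Q) (g : Q ⟶ B') (wT : f ≫ g = 0) (β : S.X₂ ⟶ Q),
      (ShortComplex.mk f g wT).ShortExact ∧ S.f ≫ β = b ≫ f ∧ β ≫ g = S.g ≫ b' := by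
  have := hh A' hA' B hB 2 one_le_two
  obtain ⟨y, hy⟩ := Ext.contravariant_sequence_exact₁ hN B
    (hS.extClass.comp (Ext.mk₀ b) (add_zero 1)) (n₁ := 2) rfl (Subsingleton.elim (α := Ext A' B 2) _ _)
  obtain ⟨K, P, i, p, wp, hP, -, hPA⟩ := hp.approx₂ B'
  have : Epi p := hP.epi_g
  have := hh P hPA B hB 1 le_rfl
  obtain ⟨Q, f, g, wT, hT, hTy⟩ := realize_of_epi y p (Subsingleton.elim _ _)
  obtain ⟨β, h1, h2⟩ := exists_hom_of_extClass hS hT b b' (by rw [hTy]; exact hy.symm)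
  exact ⟨Q, f, g, wT, β, hT, h1, h2⟩

lemma horseshoe_left (hp : IsCompleteCotorsionPair 𝓐 𝓑) (hh : IsHereditary.{w} 𝓐 𝓑)
    {S : ShortComplex 𝒜} (hS : S.ShortExact) {A A' B : 𝒜} (hB : B ∈ 𝓑) (hA' : A' ∈ 𝓐)
    (a : A ⟶ S.X₁) (a' : A' ⟶ S.X₃) (q : B ⟶ A) (w : q ≫ a = 0)
    (hN : (ShortComplex.mk q a w).ShortExact) :
    ∃ (Q : 𝒜) (f : A ⟶ Q) (g : Q ⟶ A') (wT : f ≫ g = 0) (β : Q ⟶ S.X₂),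
      (ShortComplex.mk f g wT).ShortExact ∧ f ≫ β = a ≫ S.f ∧ β ≫ S.g = g ≫ a' := by
  have := hh A' hA' B hB 2 one_le_two
  obtain ⟨y, hy⟩ := Ext.covariant_sequence_exact₃ A' hN
    ((Ext.mk₀ a').comp hS.extClass (zero_add 1)) (n₁ := 2) rfl
    (Subsingleton.elim (α := Ext A' B 2) _ _)
  obtain ⟨P, K, i, p, wp, hP, hPB, -⟩ := hp.approx₁ A
  have : Mono i := hP.mono_f
  have := hh A' hA' P hPB 1 le_rfl
  obtain ⟨Q, f, g, wT, hT, hTy⟩ := realize_of_mono y i (Subsingleton.elim _ _)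
  obtain ⟨β, h1, h2⟩ := exists_hom_of_extClass hT hS a a' (by rw [hTy]; exact hy)
  exact ⟨Q, f, g, wT, β, hT, h1, h2⟩

lemma part_b₁ (hp : IsCompleteCotorsionPair 𝓐 𝓑) (hh : IsHereditary.{w} 𝓐 𝓑)
    (W : CochainComplex 𝒜 ℤ) (hW : ∀ n : ℤ, W.ExactAt n) :
    ∃ (BW AW : CochainComplex 𝒜 ℤ) (i : W ⟶ BW) (p : BW ⟶ AW) (w : i ≫ p = 0),
        (ShortComplex.mk i p w).ShortExact ∧ BW ∈ Tilde 𝓑 ∧ AW ∈ Tilde 𝓐 := by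
  choose B A b q wN hN hB hA using fun n : ℤ => hp.approx₁ (W.cycles n)
  choose Q f g wT β hT h1 h2 using fun n : ℤ =>
    horseshoe_right hp hh (shortExact_cycles W hW n) (hB n) (hA (n + 1)) (b n) (b (n + 1)) _ _
      (hN (n + 1))
  dsimp at β h1 h2
  let D : SplicingData 𝒜 := ⟨B, Q, f, g, wT, hT⟩
  obtain ⟨φ, hφ⟩ := D.exists_homTo W b β h1 h2
  have hmono : ∀ n, Mono (β n) := by
    intro n
    have : Mono (b n) := (hN n).mono_f
    have : Mono (b (n + 1)) := (hN (n + 1)).mono_f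
    have : Mono (f n) := (hT n).mono_f
    have hS := shortExact_cycles W hW n
    exact ShortComplex.mono_τ₂_of_exact_of_mono
      (S₁ := ShortComplex.mk (W.iCycles n) (W.toCycles n (n + 1)) (iCycles_toCycles_zero W n))
      (S₂ := ShortComplex.mk (f n) (g n) (wT n))
      { τ₁ := b n, τ₂ := β n, τ₃ := b (n + 1), comm₁₂ := (h1 n).symm, comm₂₃ := h2 n } hS.exact
  have hmonoφ : Mono φ := by
    have : ∀ n, Mono (φ.f n) := fun n => by rw [hφ]; exact hmono n
    exact HomologicalComplex.mono_of_mono_f φ this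
  have hS : (ShortComplex.mk φ (cokernel.π φ) (cokernel.condition φ)).ShortExact :=
    ShortComplex.ShortExact.mk' (ShortComplex.exact_cokernel φ)
      (by dsimp; infer_instance) (by dsimp; infer_instance)
  have hexact : ∀ n, (cokernel φ).ExactAt n := exactAt_X₃ hS hW D.exactAt
  refine ⟨D.cpx, cokernel φ, φ, cokernel.π φ, cokernel.condition φ, hS,
    tilde_right hp hh D.exactAt (fun n => ?_), tilde_left hp hh hexact (fun n => ?_)⟩
  · obtain ⟨e, -⟩ := D.exists_iso n
    exact mem_right_iso hp hh e (hB n)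
  · obtain ⟨e, he⟩ := D.exists_iso n
    obtain ⟨e'⟩ := nonempty_iso_X₃ (hN n) (shortExact_cyclesMap hS hexact n) e (by
      rw [← cancel_mono (D.cpx.iCycles n)]
      dsimp
      rw [Category.assoc, HomologicalComplex.cyclesMap_i, hφ]
      refine Eq.trans ?_ (h1 n).symm
      exact congrArg (fun t => b n ≫ t) he)
    exact mem_left_iso hp hh e' (hA n)

lemma part_b₂ (hp : IsCompleteCotorsionPair 𝓐 𝓑) (hh : IsHereditary.{w} 𝓐 𝓑)
    (W : CochainComplex 𝒜 ℤ) (hW : ∀ n : ℤ, W.ExactAt n) :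
    ∃ (BW AW : CochainComplex 𝒜 ℤ) (i : BW ⟶ AW) (p : AW ⟶ W) (w : i ≫ p = 0),
        (ShortComplex.mk i p w).ShortExact ∧ BW ∈ Tilde 𝓑 ∧ AW ∈ Tilde 𝓐 := by
  choose B A q a wN hN hB hA using fun n : ℤ => hp.approx₂ (W.cycles n)
  choose Q f g wT β hT h1 h2 using fun n : ℤ =>
    horseshoe_left hp hh (shortExact_cycles W hW n) (hB n) (hA (n + 1)) (a n) (a (n + 1)) _ _
      (hN n)
  dsimp at β h1 h2
  let D : SplicingData 𝒜 := ⟨A, Q, f, g, wT, hT⟩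
  obtain ⟨φ, hφ⟩ := D.exists_homFrom W a β h1 h2
  have hepi : ∀ n, Epi (β n) := by
    intro n
    have : Epi (a n) := (hN n).epi_g
    have : Epi (a (n + 1)) := (hN (n + 1)).epi_g
    have : Epi (g n) := (hT n).epi_g
    have hS := shortExact_cycles W hW n
    have : Epi (W.toCycles n (n + 1)) := hS.epi_g
    exact ShortComplex.epi_τ₂_of_exact_of_epi
      (S₂ := ShortComplex.mk (W.iCycles n) (W.toCycles n (n + 1)) (iCycles_toCycles_zero W n))
      (S₁ := ShortComplex.mk (f n) (g n) (wT n))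
      { τ₁ := a n, τ₂ := β n, τ₃ := a (n + 1), comm₁₂ := (h1 n).symm, comm₂₃ := h2 n } hS.exact
  have hepiφ : Epi φ := by
    have : ∀ n, Epi (φ.f n) := fun n => by rw [hφ]; exact hepi n
    exact HomologicalComplex.epi_of_epi_f φ this
  have hS : (ShortComplex.mk (kernel.ι φ) φ (kernel.condition φ)).ShortExact :=
    ShortComplex.ShortExact.mk' (ShortComplex.exact_kernel φ)
      (by dsimp; infer_instance) (by dsimp; infer_instance)
  have hexact : ∀ n, (kernel φ).ExactAt n := exactAt_X₁ hS D.exactAt hW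
  refine ⟨kernel φ, D.cpx, kernel.ι φ, φ, kernel.condition φ, hS,
    tilde_right hp hh hexact (fun n => ?_), tilde_left hp hh D.exactAt (fun n => ?_)⟩
  · obtain ⟨e, he⟩ := D.exists_iso n
    obtain ⟨e'⟩ := nonempty_iso_X₁ (hN n) (shortExact_cyclesMap hS hW n) e (by
      rw [← cancel_mono (W.iCycles n)]
      dsimp
      rw [Category.assoc, HomologicalComplex.cyclesMap_i, hφ]
      refine (Category.assoc _ _ _).symm.trans (Eq.trans ?_ (h1 n))
      exact congrArg (fun t => t ≫ β n) he)
    exact mem_right_iso hp hh e' (hB n)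
  · obtain ⟨e, -⟩ := D.exists_iso n
    exact mem_left_iso hp hh e (hA n)

lemma part_a (hh : IsHereditary.{w} 𝓐 𝓑)
    (X : CochainComplex 𝒜 ℤ) (hX : X ∈ Tilde 𝓐) (Y : CochainComplex 𝒜 ℤ) (hY : Y ∈ Tilde 𝓑) :
    Ext1Zero X Y := by
  intro E i p wE hE
  obtain ⟨hX0, hX1, hX2⟩ := hX
  obtain ⟨hY0, hY1, hY2⟩ := hY
  have hdeg : ∀ n, ∃ w, (ShortComplex.mk (i.f n) (p.f n) w).ShortExact := fun n =>
    ⟨by rw [← HomologicalComplex.comp_f, wE, HomologicalComplex.zero_f],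
      (HomologicalComplex.shortExact_iff_degreewise_shortExact _).1 hE n⟩
  have hmono : ∀ n, Mono (i.f n) := fun n => (hdeg n).choose_spec.mono_f
  have hs : ∀ n, ∃ s : X.cycles n ⟶ E.cycles n, s ≫ HomologicalComplex.cyclesMap p n = 𝟙 _ :=
    fun n => ext1Zero_of_subsingleton (hh _ (hX2 n) _ (hY2 n) 1 le_rfl) _ _ _ _
      (shortExact_cyclesMap hE hX0 n)
  choose s hs using hs
  have hsi : ∀ n, s n ≫ E.iCycles n ≫ p.f n = X.iCycles n := by
    intro n
    rw [← HomologicalComplex.cyclesMap_i, reassoc_of% (hs n)]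
  have ht : ∀ n, ∃ t : X.X n ⟶ E.X n, t ≫ p.f n = 𝟙 _ ∧
      X.iCycles n ≫ t = s n ≫ E.iCycles n ∧
      t ≫ E.d n (n + 1) = X.toCycles n (n + 1) ≫ s (n + 1) ≫ E.iCycles (n + 1) := by
    intro n
    obtain ⟨wn, hn⟩ := hdeg n
    obtain ⟨wn1, hn1⟩ := hdeg (n + 1)
    have := hmono n
    have := hmono (n + 1)
    have hcX := shortExact_cycles X hX0 n
    have hcY := shortExact_cycles Y hY0 n
    have hepi : Epi (X.toCycles n (n + 1)) := hcX.epi_g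
    obtain ⟨u, hu⟩ := ext1Zero_of_subsingleton (hh _ (hX1 n) _ (hY1 n) 1 le_rfl) _ _ _ _ hn
    obtain ⟨φ, hφ⟩ := hn.exact.lift' (X.iCycles n ≫ u - s n ≫ E.iCycles n) (by
      dsimp
      rw [Preadditive.sub_comp, Category.assoc, Category.assoc, hu, hsi, Category.comp_id, sub_self])
    dsimp at φ hφ
    obtain ⟨ψ, hψ⟩ := exists_ext_of_ext hcX φ (by
      have := hh _ (hX2 (n + 1)) _ (hY1 n) 1 le_rfl
      exact Subsingleton.elim (α := Ext (X.cycles (n + 1)) (Y.X n) 1) _ _)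
    dsimp at ψ hψ
    obtain ⟨u', hu', hu'i⟩ : ∃ u' : X.X n ⟶ E.X n, u' ≫ p.f n = 𝟙 _ ∧
        X.iCycles n ≫ u' = s n ≫ E.iCycles n := by
      refine ⟨u - ψ ≫ i.f n, ?_, ?_⟩
      · rw [Preadditive.sub_comp, hu, Category.assoc, wn, comp_zero, sub_zero]
      · rw [Preadditive.comp_sub, reassoc_of% hψ, hφ]; abel
    obtain ⟨θ₁, hθ₁⟩ := hcX.exact.desc'
      (u' ≫ E.d n (n + 1) - X.toCycles n (n + 1) ≫ s (n + 1) ≫ E.iCycles (n + 1)) (by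
        have h0 := iCycles_toCycles_zero X n
        dsimp
        rw [Preadditive.comp_sub, reassoc_of% hu'i, reassoc_of% h0]
        simp)
    dsimp at θ₁ hθ₁
    have hθp : θ₁ ≫ p.f (n + 1) = 0 := by
      rw [← cancel_epi (X.toCycles n (n + 1)), reassoc_of% hθ₁, Preadditive.sub_comp]
      simp only [Category.assoc]
      rw [hsi, ← p.comm, reassoc_of% hu']
      simp
    have hθd : θ₁ ≫ E.d (n + 1) (n + 1 + 1) = 0 := by
      rw [← cancel_epi (X.toCycles n (n + 1)), reassoc_of% hθ₁, Preadditive.sub_comp]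
      simp
    obtain ⟨θ₂, hθ₂⟩ := hn1.exact.lift' θ₁ hθp
    dsimp at θ₂ hθ₂
    have hθ₂d : θ₂ ≫ Y.d (n + 1) (n + 1 + 1) = 0 := by
      have := hmono (n + 1 + 1)
      rw [← cancel_mono (i.f (n + 1 + 1)), Category.assoc, ← i.comm, reassoc_of% hθ₂, hθd,
        zero_comp]
    obtain ⟨l, hl⟩ := exists_lift_of_ext hcY (Y.liftCycles θ₂ (n + 1 + 1) (by simp) hθ₂d) (by
      have := hh _ (hX2 (n + 1)) _ (hY2 n) 1 le_rfl
      exact Subsingleton.elim (α := Ext (X.cycles (n + 1)) (Y.cycles n) 1) _ _)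
    dsimp at l hl
    have hl' : l ≫ Y.d n (n + 1) = θ₂ := by
      rw [← Y.toCycles_i, reassoc_of% hl, HomologicalComplex.liftCycles_i]
    refine ⟨u' - X.toCycles n (n + 1) ≫ l ≫ i.f n, ?_, ?_, ?_⟩
    · rw [Preadditive.sub_comp, hu', Category.assoc, Category.assoc, wn]; simp
    · have h0 := iCycles_toCycles_zero X n
      rw [Preadditive.comp_sub, reassoc_of% h0, hu'i]; simp
    · rw [Preadditive.sub_comp, Category.assoc, Category.assoc, i.comm, reassoc_of% hl', hθ₂,
        hθ₁]
      abel
  choose t ht1 ht2 ht3 using ht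
  refine ⟨CochainComplex.ofHom t (fun n => ?_), ?_⟩
  · rw [ht3, ← ht2, X.toCycles_i_assoc]
  · ext n
    exact ht1 n

end Cotorsion

/-- Let `(𝓐, 𝓑)` be a complete hereditary cotorsion pair in an abelian category `𝒜`.
Then (a) `Ext¹(X, Y) = 0` in the category of cochain complexes for every `X ∈ Ã` and
`Y ∈ B̃`, i.e. every short exact sequence of complexes `0 → Y → E → X → 0` with
`X ∈ Ã`, `Y ∈ B̃` splits; and (b) every acyclic complex `W` admits short exact
sequences of complexes `0 → W → B_W → A_W → 0` and `0 → B^W → A^W → W → 0` with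
`A_W, A^W ∈ Ã` and `B_W, B^W ∈ B̃`. -/
theorem stmt_11 [HasExt.{w} 𝒜] (𝓐 𝓑 : Set 𝒜)
    (hpair : IsCompleteCotorsionPair 𝓐 𝓑) (hher : IsHereditary 𝓐 𝓑) :
    (∀ X ∈ Tilde 𝓐, ∀ Y ∈ Tilde 𝓑, Ext1Zero X Y) ∧
    (∀ W : CochainComplex 𝒜 ℤ, (∀ n : ℤ, W.ExactAt n) →
      (∃ (BW AW : CochainComplex 𝒜 ℤ) (i : W ⟶ BW) (p : BW ⟶ AW) (w : i ≫ p = 0),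
        (ShortComplex.mk i p w).ShortExact ∧ BW ∈ Tilde 𝓑 ∧ AW ∈ Tilde 𝓐) ∧
      (∃ (BW AW : CochainComplex 𝒜 ℤ) (i : BW ⟶ AW) (p : AW ⟶ W) (w : i ≫ p = 0),
        (ShortComplex.mk i p w).ShortExact ∧ BW ∈ Tilde 𝓑 ∧ AW ∈ Tilde 𝓐)) := by
  exact ⟨fun X hX Y hY => part_a hher X hX Y hY,
    fun W hW => ⟨part_b₁ hpair hher W hW, part_b₂ hpair hher W hW⟩⟩
end

section
/- Let C be an abelian category and (A, B) a cotorsion pair in C such that A is generating (every object of C is a quotient of an object of A) and B is cogenerating (every object of C embeds into an object of B). Then a cochain complex Y over C satisfies Ext¹_{Ch(C)}(Sⁿ(A), Y) = 0 for all A ∈ A and all n ∈ ℤ if and only if Y ∈ B̃; dually, a cochain complex X over C satisfies Ext¹_{Ch(C)}(X, Sⁿ(B)) = 0 for all B ∈ B and all n ∈ ℤ if and only if X ∈ Ã. -/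
open CategoryTheory CategoryTheory.Limits

universe w v u

variable {𝒜 : Type u} [Category.{v} 𝒜] [Abelian 𝒜]

/-- The cochain complex with the object `A` concentrated in degree `n`. -/
noncomputable def sph (n : ℤ) (A : 𝒜) : CochainComplex 𝒜 ℤ :=
  (HomologicalComplex.single 𝒜 (ComplexShape.up ℤ) n).obj A


section Ext1Helpers

variable {C : Type*} [Category C] [Abelian C]

lemma Ext1Zero.of_retraction {A Y : C}
    (h : ∀ (E : C) (i : Y ⟶ E) (p : E ⟶ A) (w : i ≫ p = 0),
      (ShortComplex.mk i p w).ShortExact → ∃ r : E ⟶ Y, i ≫ r = 𝟙 Y) : Ext1Zero A Y := by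
  intro E i p w hS
  obtain ⟨r, hr⟩ := h E i p w hS
  have := hS.epi_g
  have σ := ShortComplex.Splitting.ofExactOfRetraction _ hS.exact r hr hS.epi_g
  exact ⟨σ.s, σ.s_g⟩

lemma Ext1Zero.retraction {A Y : C} (h : Ext1Zero A Y) {E : C} {i : Y ⟶ E} {p : E ⟶ A}
    (w : i ≫ p = 0) (hS : (ShortComplex.mk i p w).ShortExact) : ∃ r : E ⟶ Y, i ≫ r = 𝟙 Y := by
  obtain ⟨s, hs⟩ := h E i p w hS
  have σ := ShortComplex.Splitting.ofExactOfSection _ hS.exact s hs hS.mono_f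
  exact ⟨σ.r, σ.f_r⟩

/-- Pushout of a short exact sequence. -/
lemma pushout_shortExact {X E A Y : C} {i : X ⟶ E} {p : E ⟶ A} (w : i ≫ p = 0)
    (hS : (ShortComplex.mk i p w).ShortExact) (φ : X ⟶ Y) :
    (ShortComplex.mk (pushout.inr i φ) (pushout.desc (f := i) (g := φ) p 0 (by simp [w]))
      (by simp [pushout.inl_desc, pushout.inr_desc,
      pullback.lift_fst, pullback.lift_snd, pushout.inl_desc_assoc, pushout.inr_desc_assoc,
      pullback.lift_fst_assoc, pullback.lift_snd_assoc])).ShortExact := by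
  have hm : Mono i := hS.mono_f
  have he : Epi p := hS.epi_g
  have he' : Epi (pushout.desc (f := i) (g := φ) p 0 (by simp [w])) := by
    have : Epi (pushout.inl i φ ≫ pushout.desc (f := i) (g := φ) p 0 (by simp [w])) := by
      simpa [pushout.inl_desc, pushout.inr_desc,
      pullback.lift_fst, pullback.lift_snd, pushout.inl_desc_assoc, pushout.inr_desc_assoc,
      pullback.lift_fst_assoc, pullback.lift_snd_assoc] using he
    exact epi_of_epi (pushout.inl i φ) _
  refine ShortComplex.ShortExact.mk' ?_ (by dsimp; infer_instance) he'
  refine ShortComplex.exact_of_g_is_cokernel _ ?_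
  have key : ∀ {Z : C} (k : pushout i φ ⟶ Z) (_ : pushout.inr i φ ≫ k = 0),
      i ≫ pushout.inl i φ ≫ k = 0 := by
    intro Z k hk
    rw [pushout.condition_assoc, hk, comp_zero]
  refine CokernelCofork.IsColimit.ofπ _ _
    (fun k hk => hS.exact.desc (pushout.inl i φ ≫ k) (key k hk)) ?_ ?_
  · intro Z k hk
    apply pushout.hom_ext
    · simpa [pushout.inl_desc, pushout.inr_desc,
      pullback.lift_fst, pullback.lift_snd, pushout.inl_desc_assoc, pushout.inr_desc_assoc,
      pullback.lift_fst_assoc, pullback.lift_snd_assoc] using hS.exact.g_desc (pushout.inl i φ ≫ k) (key k hk)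
    · simpa [pushout.inl_desc, pushout.inr_desc,
      pullback.lift_fst, pullback.lift_snd, pushout.inl_desc_assoc, pushout.inr_desc_assoc,
      pullback.lift_fst_assoc, pullback.lift_snd_assoc] using hk.symm
  · intro Z k hk m hm
    refine he'.left_cancellation _ _ ?_
    refine Eq.trans hm ?_
    symm
    apply pushout.hom_ext
    · simpa [pushout.inl_desc, pushout.inr_desc,
      pullback.lift_fst, pullback.lift_snd, pushout.inl_desc_assoc, pushout.inr_desc_assoc,
      pullback.lift_fst_assoc, pullback.lift_snd_assoc] using hS.exact.g_desc (pushout.inl i φ ≫ k) (key k hk)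
    · simpa [pushout.inl_desc, pushout.inr_desc,
      pullback.lift_fst, pullback.lift_snd, pushout.inl_desc_assoc, pushout.inr_desc_assoc,
      pullback.lift_fst_assoc, pullback.lift_snd_assoc] using hk.symm

/-- Pullback of a short exact sequence. -/
lemma pullback_shortExact {Y E A X : C} {i : Y ⟶ E} {p : E ⟶ A} (w : i ≫ p = 0)
    (hS : (ShortComplex.mk i p w).ShortExact) (φ : X ⟶ A) :
    (ShortComplex.mk (pullback.lift (f := p) (g := φ) i 0 (by simp [w])) (pullback.snd p φ)
      (by simp [pushout.inl_desc, pushout.inr_desc,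
      pullback.lift_fst, pullback.lift_snd, pushout.inl_desc_assoc, pushout.inr_desc_assoc,
      pullback.lift_fst_assoc, pullback.lift_snd_assoc])).ShortExact := by
  have hm : Mono i := hS.mono_f
  have he : Epi p := hS.epi_g
  have hm' : Mono (pullback.lift (f := p) (g := φ) i 0 (by simp [w])) := by
    have : Mono (pullback.lift (f := p) (g := φ) i 0 (by simp [w]) ≫ pullback.fst p φ) := by
      simpa [pushout.inl_desc, pushout.inr_desc,
      pullback.lift_fst, pullback.lift_snd, pushout.inl_desc_assoc, pushout.inr_desc_assoc,
      pullback.lift_fst_assoc, pullback.lift_snd_assoc] using hm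
    exact mono_of_mono _ (pullback.fst p φ)
  refine ShortComplex.ShortExact.mk' ?_ hm' (by dsimp; infer_instance)
  refine ShortComplex.exact_of_f_is_kernel _ ?_
  have key : ∀ {Z : C} (k : Z ⟶ pullback p φ) (_ : k ≫ pullback.snd p φ = 0),
      (k ≫ pullback.fst p φ) ≫ p = 0 := by
    intro Z k hk
    rw [Category.assoc, pullback.condition, reassoc_of% hk, zero_comp]
  refine KernelFork.IsLimit.ofι _ _
    (fun k hk => hS.exact.lift (k ≫ pullback.fst p φ) (key k hk)) ?_ ?_
  · intro Z k hk
    apply pullback.hom_ext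
    · simpa [pushout.inl_desc, pushout.inr_desc,
      pullback.lift_fst, pullback.lift_snd, pushout.inl_desc_assoc, pushout.inr_desc_assoc,
      pullback.lift_fst_assoc, pullback.lift_snd_assoc] using hS.exact.lift_f (k ≫ pullback.fst p φ) (key k hk)
    · simpa [pushout.inl_desc, pushout.inr_desc,
      pullback.lift_fst, pullback.lift_snd, pushout.inl_desc_assoc, pushout.inr_desc_assoc,
      pullback.lift_fst_assoc, pullback.lift_snd_assoc] using hk.symm
  · intro Z k hk m hm
    refine hm'.right_cancellation _ _ ?_
    refine Eq.trans hm ?_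
    symm
    apply pullback.hom_ext
    · simpa [pushout.inl_desc, pushout.inr_desc,
      pullback.lift_fst, pullback.lift_snd, pushout.inl_desc_assoc, pushout.inr_desc_assoc,
      pullback.lift_fst_assoc, pullback.lift_snd_assoc] using hS.exact.lift_f (k ≫ pullback.fst p φ) (key k hk)
    · simpa [pushout.inl_desc, pushout.inr_desc,
      pullback.lift_fst, pullback.lift_snd, pushout.inl_desc_assoc, pushout.inr_desc_assoc,
      pullback.lift_fst_assoc, pullback.lift_snd_assoc] using hk.symm

lemma Ext1Zero.extend {A Y : C} (h : Ext1Zero A Y) {X E : C} {i : X ⟶ E} {p : E ⟶ A}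
    (w : i ≫ p = 0) (hS : (ShortComplex.mk i p w).ShortExact) (φ : X ⟶ Y) :
    ∃ ψ : E ⟶ Y, i ≫ ψ = φ := by
  obtain ⟨r, hr⟩ := h.retraction _ (pushout_shortExact w hS φ)
  exact ⟨pushout.inl i φ ≫ r, by rw [pushout.condition_assoc, hr, Category.comp_id]⟩

lemma Ext1Zero.lift {X Y : C} (h : Ext1Zero X Y) {A E : C} {i : Y ⟶ E} {p : E ⟶ A}
    (w : i ≫ p = 0) (hS : (ShortComplex.mk i p w).ShortExact) (φ : X ⟶ A) :
    ∃ ψ : X ⟶ E, ψ ≫ p = φ := by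
  obtain ⟨r, hr⟩ := h _ _ _ _ (pullback_shortExact w hS φ)
  exact ⟨r ≫ pullback.fst p φ, by rw [Category.assoc, pullback.condition, reassoc_of% hr]⟩

lemma Ext1Zero.ext_right {A Y₁ Y₂ Y₃ : C} (h₁ : Ext1Zero A Y₁) (h₃ : Ext1Zero A Y₃)
    {a : Y₁ ⟶ Y₂} {b : Y₂ ⟶ Y₃} (w : a ≫ b = 0) (hS : (ShortComplex.mk a b w).ShortExact) :
    Ext1Zero A Y₂ := by
  intro E i p w' hE
  have hma : Mono a := hS.mono_f
  have heb : Epi b := hS.epi_g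
  have hmi : Mono i := hE.mono_f
  obtain ⟨s, hs⟩ := h₃ _ _ _ _ (pushout_shortExact w' hE b)
  have w2 : (a ≫ i) ≫ pushout.inl i b = 0 := by
    rw [Category.assoc, pushout.condition, reassoc_of% w, zero_comp]
  have hex : (ShortComplex.mk (a ≫ i) (pushout.inl i b) w2).ShortExact := by
    refine ShortComplex.ShortExact.mk' ?_ (by dsimp; infer_instance) (by dsimp; infer_instance)
    refine ShortComplex.exact_of_g_is_cokernel _ ?_
    have key : ∀ {Z : C} (k : E ⟶ Z) (_ : (a ≫ i) ≫ k = 0), a ≫ i ≫ k = 0 := by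
      intro Z k hk
      simpa [pushout.inl_desc, pushout.inr_desc,
      pullback.lift_fst, pullback.lift_snd, pushout.inl_desc_assoc, pushout.inr_desc_assoc,
      pullback.lift_fst_assoc, pullback.lift_snd_assoc] using hk
    refine CokernelCofork.IsColimit.ofπ _ _
      (fun k hk => pushout.desc k (hS.exact.desc (i ≫ k) (key k hk))
        (hS.exact.g_desc (i ≫ k) (key k hk)).symm) ?_ ?_
    · intro Z k hk
      simp [pushout.inl_desc, pushout.inr_desc,
      pullback.lift_fst, pullback.lift_snd, pushout.inl_desc_assoc, pushout.inr_desc_assoc,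
      pullback.lift_fst_assoc, pullback.lift_snd_assoc]
    · intro Z k hk m hm
      rw [← cancel_epi (pushout.inl i b)]
      simpa [pushout.inl_desc, pushout.inr_desc,
      pullback.lift_fst, pullback.lift_snd, pushout.inl_desc_assoc, pushout.inr_desc_assoc,
      pullback.lift_fst_assoc, pullback.lift_snd_assoc] using hm
  obtain ⟨t, ht⟩ := h₁.lift w2 hex s
  refine ⟨t, ?_⟩
  rw [← hs, ← ht]
  simp [pushout.inl_desc, pushout.inr_desc,
      pullback.lift_fst, pullback.lift_snd, pushout.inl_desc_assoc, pushout.inr_desc_assoc,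
      pullback.lift_fst_assoc, pullback.lift_snd_assoc]

lemma Ext1Zero.ext_left {B X₁ X₂ X₃ : C} (h₁ : Ext1Zero X₁ B) (h₃ : Ext1Zero X₃ B)
    {a : X₁ ⟶ X₂} {b : X₂ ⟶ X₃} (w : a ≫ b = 0) (hS : (ShortComplex.mk a b w).ShortExact) :
    Ext1Zero X₂ B := by
  apply Ext1Zero.of_retraction
  intro E i p w' hE
  have hma : Mono a := hS.mono_f
  have heb : Epi b := hS.epi_g
  have hep : Epi p := hE.epi_g
  obtain ⟨s, hs⟩ := h₁.retraction _ (pullback_shortExact w' hE a)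
  have w2 : pullback.fst p a ≫ p ≫ b = 0 := by
    rw [pullback.condition_assoc, w, comp_zero]
  have hex : (ShortComplex.mk (pullback.fst p a) (p ≫ b) w2).ShortExact := by
    refine ShortComplex.ShortExact.mk' ?_ (by dsimp; infer_instance) (by dsimp; infer_instance)
    refine ShortComplex.exact_of_f_is_kernel _ ?_
    have key : ∀ {Z : C} (k : Z ⟶ E) (_ : k ≫ p ≫ b = 0), (k ≫ p) ≫ b = 0 := by
      intro Z k hk
      simpa [pushout.inl_desc, pushout.inr_desc,
      pullback.lift_fst, pullback.lift_snd, pushout.inl_desc_assoc, pushout.inr_desc_assoc,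
      pullback.lift_fst_assoc, pullback.lift_snd_assoc] using hk
    refine KernelFork.IsLimit.ofι _ _
      (fun k hk => pullback.lift k (hS.exact.lift (k ≫ p) (key k hk))
        (hS.exact.lift_f (k ≫ p) (key k hk)).symm) ?_ ?_
    · intro Z k hk
      simp [pushout.inl_desc, pushout.inr_desc,
      pullback.lift_fst, pullback.lift_snd, pushout.inl_desc_assoc, pushout.inr_desc_assoc,
      pullback.lift_fst_assoc, pullback.lift_snd_assoc]
    · intro Z k hk m hm
      rw [← cancel_mono (pullback.fst p a)]
      simpa [pushout.inl_desc, pushout.inr_desc,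
      pullback.lift_fst, pullback.lift_snd, pushout.inl_desc_assoc, pushout.inr_desc_assoc,
      pullback.lift_fst_assoc, pullback.lift_snd_assoc] using hm
  obtain ⟨t, ht⟩ := h₃.extend w2 hex s
  refine ⟨t, ?_⟩
  rw [← hs, ← ht]
  simp [pushout.inl_desc, pushout.inr_desc,
      pullback.lift_fst, pullback.lift_snd, pushout.inl_desc_assoc, pushout.inr_desc_assoc,
      pullback.lift_fst_assoc, pullback.lift_snd_assoc]

lemma Ext1Zero.of_iso_left {X X' Y : C} (h : Ext1Zero X Y) (e : X ≅ X') : Ext1Zero X' Y := by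
  intro E i p w hS
  obtain ⟨s, hs⟩ := h.lift w hS e.hom
  exact ⟨e.inv ≫ s, by simp [hs]⟩

end Ext1Helpers

section Complexes

open HomologicalComplex

lemma up_next (n : ℤ) : (ComplexShape.up ℤ).next n = n + 1 :=
  (ComplexShape.up ℤ).next_eq' rfl

lemma up_prev (n : ℤ) : (ComplexShape.up ℤ).prev n = n - 1 :=
  (ComplexShape.up ℤ).prev_eq' (by simp)

/-- Inclusion of a sphere into a disk. -/
noncomputable def diskI {i j : ℤ} (hij : (ComplexShape.up ℤ).Rel i j) (A : 𝒜) :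
    (single 𝒜 (ComplexShape.up ℤ) j).obj A ⟶ double (𝟙 A) hij :=
  mkHomFromSingle (doubleXIso₁ (𝟙 A) hij (by rintro rfl; simp at hij)).inv (by
    intro k _
    rw [double_d_eq_zero₀ _ _ _ _ (by rintro rfl; simp at hij), comp_zero])

/-- Projection of a disk onto a sphere. -/
noncomputable def diskP {i j : ℤ} (hij : (ComplexShape.up ℤ).Rel i j) (A : 𝒜) :
    double (𝟙 A) hij ⟶ (single 𝒜 (ComplexShape.up ℤ) i).obj A :=
  mkHomToSingle (doubleXIso₀ (𝟙 A) hij).hom (by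
    intro k _
    rw [double_d_eq_zero₁ _ _ _ _ (by rintro rfl; simp at hij), zero_comp])

lemma disk_w {i j : ℤ} (hij : (ComplexShape.up ℤ).Rel i j) (A : 𝒜) :
    diskI hij A ≫ diskP hij A = 0 := by
  apply from_single_hom_ext
  apply (isZero_single_obj_X (ComplexShape.up ℤ) i A j (by rintro rfl; simp at hij)).eq_of_tgt

lemma disk_shortExact {i j : ℤ} (hij : (ComplexShape.up ℤ).Rel i j) (A : 𝒜) :
    (ShortComplex.mk (diskI hij A) (diskP hij A) (disk_w hij A)).ShortExact := by
  have hne : i ≠ j := by rintro rfl; simp at hij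
  have hm : Mono (diskI hij A) := by
    refine ⟨fun u v huv => ?_⟩
    apply to_single_hom_ext
    have := congr_hom huv j
    rw [comp_f, comp_f] at this
    dsimp only [diskI] at this
    rw [mkHomFromSingle_f] at this
    rwa [cancel_mono] at this
  have he : Epi (diskP hij A) := by
    refine ⟨fun u v huv => ?_⟩
    apply from_single_hom_ext
    have := congr_hom huv i
    rw [comp_f, comp_f] at this
    dsimp only [diskP] at this
    rw [mkHomToSingle_f] at this
    rwa [cancel_epi] at this
  refine ShortComplex.ShortExact.mk' ?_ hm he
  refine ShortComplex.exact_of_g_is_cokernel _ ?_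
  have key : ∀ {Z : CochainComplex 𝒜 ℤ} (k : double (𝟙 A) hij ⟶ Z)
      (_ : diskI hij A ≫ k = 0), k.f j = 0 := by
    intro Z k hk
    have := congr_hom hk j
    rw [comp_f] at this
    dsimp only [diskI] at this
    rw [mkHomFromSingle_f, Category.assoc, zero_f, Preadditive.IsIso.comp_left_eq_zero,
      Preadditive.IsIso.comp_left_eq_zero] at this
    exact this
  have fac : ∀ {Z : CochainComplex 𝒜 ℤ} (k : double (𝟙 A) hij ⟶ Z)
      (_ : diskI hij A ≫ k = 0), ∃ l : (single 𝒜 (ComplexShape.up ℤ) i).obj A ⟶ Z, diskP hij A ≫ l = k := by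
    intro Z k hk
    refine ⟨mkHomFromSingle ((doubleXIso₀ (𝟙 A) hij).inv ≫ k.f i) ?_, ?_⟩
    · intro j' hj'
      obtain rfl := (ComplexShape.up ℤ).next_eq hij hj'
      rw [Category.assoc, k.comm, key k hk, comp_zero, comp_zero]
    · apply from_double_hom_ext
      · rw [comp_f]
        dsimp only [diskP]
        rw [mkHomToSingle_f]
        erw [mkHomFromSingle_f]
        simp
      · refine Eq.trans ?_ (key k hk).symm
        rw [comp_f]
        have : (diskP hij A).f j = 0 :=
          (isZero_single_obj_X (ComplexShape.up ℤ) i A j hne.symm).eq_of_tgt _ _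
        rw [this, zero_comp]
  exact CokernelCofork.IsColimit.ofπ _ _
    (fun k hk => (fac k hk).choose) (fun k hk => (fac k hk).choose_spec)
    (fun k hk m hm => by
      rw [← cancel_epi (diskP hij A)]
      exact hm.trans (fac k hk).choose_spec.symm)

lemma sph_shortExact (n : ℤ) {X E A : 𝒜} {i : X ⟶ E} {p : E ⟶ A} (w : i ≫ p = 0)
    (hS : (ShortComplex.mk i p w).ShortExact) :
    (ShortComplex.mk (X₁ := (single 𝒜 (ComplexShape.up ℤ) n).obj X) (X₂ := (single 𝒜 (ComplexShape.up ℤ) n).obj E) (X₃ := (single 𝒜 (ComplexShape.up ℤ) n).obj A)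
      ((single 𝒜 (ComplexShape.up ℤ) n).map i) ((single 𝒜 (ComplexShape.up ℤ) n).map p)
      (by rw [← Functor.map_comp, w, Functor.map_zero])).ShortExact :=
  hS.map_of_exact (single 𝒜 (ComplexShape.up ℤ) n)

lemma exactAt_iff_epi_toCycles' (K : CochainComplex 𝒜 ℤ) {m n : ℤ}
    (h : (ComplexShape.up ℤ).Rel m n) : K.ExactAt n ↔ Epi (K.toCycles m n) := by
  have hc := K.homologyIsCokernel m n ((ComplexShape.up ℤ).prev_eq' h)
  rw [exactAt_iff_isZero_homology]
  constructor
  · intro hz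
    exact Preadditive.epi_of_isZero_cokernel' _ hc hz
  · intro he
    refine IsZero.of_epi_eq_zero (K.homologyπ n) ?_
    rw [← cancel_epi (K.toCycles m n), toCycles_comp_homologyπ, comp_zero]

lemma exactAt_iff_mono_fromOpcycles' (K : CochainComplex 𝒜 ℤ) {m n : ℤ}
    (h : (ComplexShape.up ℤ).Rel m n) : K.ExactAt m ↔ Mono (K.fromOpcycles m n) := by
  have hc := K.homologyIsKernel m n ((ComplexShape.up ℤ).next_eq' h)
  rw [exactAt_iff_isZero_homology]
  constructor
  · intro hz
    exact Preadditive.mono_of_isZero_kernel' _ hc hz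
  · intro he
    refine IsZero.of_mono_eq_zero (K.homologyι m) ?_
    rw [← cancel_mono (K.fromOpcycles m n), homologyι_comp_fromOpcycles, zero_comp]

lemma cycles_w (K : CochainComplex 𝒜 ℤ) (m n : ℤ) : K.iCycles m ≫ K.toCycles m n = 0 := by
  rw [← cancel_mono (K.iCycles n)]
  simp

lemma cycles_shortExact (K : CochainComplex 𝒜 ℤ) {m n : ℤ}
    (h : (ComplexShape.up ℤ).Rel m n) (hK : K.ExactAt n) :
    (ShortComplex.mk (K.iCycles m) (K.toCycles m n) (cycles_w K m n)).ShortExact := by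
  have := (exactAt_iff_epi_toCycles' K h).1 hK
  refine ShortComplex.ShortExact.mk' ?_ (by dsimp; infer_instance) this
  refine ShortComplex.exact_of_f_is_kernel _ ?_
  exact KernelFork.IsLimit.ofι _ _
    (fun k hk => K.liftCycles k n ((ComplexShape.up ℤ).next_eq' h) (by
      rw [← K.toCycles_i m n, reassoc_of% hk, zero_comp]))
    (fun k hk => by simp)
    (fun k hk t ht => by
      rw [← cancel_mono (K.iCycles m), liftCycles_i]
      exact ht)

/-- For an acyclic complex, `opcycles` in a degree agree with cycles in the next. -/
lemma opcycles_iso_cycles (K : CochainComplex 𝒜 ℤ) {m n : ℤ}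
    (h : (ComplexShape.up ℤ).Rel m n) (hm : K.ExactAt m) (hn : K.ExactAt n) :
    Nonempty (K.opcycles m ≅ K.cycles n) := by
  have h1 := (exactAt_iff_epi_toCycles' K h).1 hn
  have h2 := (exactAt_iff_mono_fromOpcycles' K h).1 hm
  have : Epi (K.opcyclesToCycles m n) := by
    rw [← K.pOpcycles_opcyclesToCycles] at h1
    exact epi_of_epi (K.pOpcycles m) _
  have : Mono (K.opcyclesToCycles m n) := by
    rw [← K.opcyclesToCycles_iCycles] at h2
    exact mono_of_mono _ (K.iCycles n)
  have : IsIso (K.opcyclesToCycles m n) := isIso_of_mono_of_epi _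
  exact ⟨asIso (K.opcyclesToCycles m n)⟩

lemma ext_sph_of_exact (Y : CochainComplex 𝒜 ℤ) (A : 𝒜) (n : ℤ) (hY : Y.ExactAt (n + 1))
    (hA : Ext1Zero A (Y.cycles n)) : Ext1Zero ((single 𝒜 (ComplexShape.up ℤ) n).obj A) Y := by
  intro E i p w hS
  have hm : Mono i := hS.mono_f
  have hrel : (ComplexShape.up ℤ).Rel n (n + 1) := rfl
  have hepi : Epi (homologyMap p n) :=
    (hS.homology_exact₃ n (n + 1) hrel).epi_f
      (((exactAt_iff_isZero_homology _ _).1 hY).eq_of_tgt _ _)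
  have hiso : IsIso (((single 𝒜 (ComplexShape.up ℤ) n).obj A).homologyπ n) :=
    ((single 𝒜 (ComplexShape.up ℤ) n).obj A).isIso_homologyπ _ n rfl rfl
  have hepi2 : Epi (cyclesMap p n) := by
    have : Epi (cyclesMap p n ≫ ((single 𝒜 (ComplexShape.up ℤ) n).obj A).homologyπ n) := by
      rw [← homologyπ_naturality]
      infer_instance
    have h2 : cyclesMap p n = (cyclesMap p n ≫ ((single 𝒜 (ComplexShape.up ℤ) n).obj A).homologyπ n) ≫
      inv (((single 𝒜 (ComplexShape.up ℤ) n).obj A).homologyπ n) := by simp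
    rw [h2]
    infer_instance
  have hc : (ShortComplex.mk (cyclesMap i n) (cyclesMap p n)
      (by rw [← cyclesMap_comp, w, cyclesMap_zero])).ShortExact :=
    ShortComplex.ShortExact.mk' (cycles_left_exact _ hS.exact n)
      (by dsimp; infer_instance) hepi2
  obtain ⟨ψ, hψ⟩ := hA.lift _ hc (singleObjCyclesSelfIso (ComplexShape.up ℤ) n A).inv
  refine ⟨mkHomFromSingle (ψ ≫ E.iCycles n) (by simp), ?_⟩
  apply from_single_hom_ext
  rw [comp_f, mkHomFromSingle_f, Category.assoc, Category.assoc, ← cyclesMap_i,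
    reassoc_of% hψ]
  erw [singleObjCyclesSelfIso_inv_iCycles]
  simp

lemma ext_to_sph_of_exact (X : CochainComplex 𝒜 ℤ) (B : 𝒜) (n : ℤ) (hX : X.ExactAt (n - 1))
    (hB : Ext1Zero (X.opcycles n) B) : Ext1Zero X ((single 𝒜 (ComplexShape.up ℤ) n).obj B) := by
  apply Ext1Zero.of_retraction
  intro E i p w hS
  have he : Epi p := hS.epi_g
  have hrel : (ComplexShape.up ℤ).Rel (n - 1) n := by simp
  have hmono : Mono (homologyMap i n) :=
    (hS.homology_exact₁ (n - 1) n hrel).mono_g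
      (((exactAt_iff_isZero_homology _ _).1 hX).eq_of_src _ _)
  have hiso : IsIso (((single 𝒜 (ComplexShape.up ℤ) n).obj B).homologyι n) :=
    ((single 𝒜 (ComplexShape.up ℤ) n).obj B).isIso_homologyι n _ rfl rfl
  have hmono2 : Mono (opcyclesMap i n) := by
    have : Mono (((single 𝒜 (ComplexShape.up ℤ) n).obj B).homologyι n ≫ opcyclesMap i n) := by
      rw [← homologyι_naturality]
      infer_instance
    have h2 : opcyclesMap i n = inv (((single 𝒜 (ComplexShape.up ℤ) n).obj B).homologyι n) ≫
      (((single 𝒜 (ComplexShape.up ℤ) n).obj B).homologyι n ≫ opcyclesMap i n) := by simp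
    rw [h2]
    infer_instance
  have hc : (ShortComplex.mk (opcyclesMap i n) (opcyclesMap p n)
      (by rw [← opcyclesMap_comp, w, opcyclesMap_zero])).ShortExact :=
    ShortComplex.ShortExact.mk' (opcycles_right_exact _ hS.exact n)
      hmono2 (by dsimp; infer_instance)
  obtain ⟨ψ, hψ⟩ := hB.extend _ hc (singleObjOpcyclesSelfIso (ComplexShape.up ℤ) n B).inv
  refine ⟨mkHomToSingle (E.pOpcycles n ≫ ψ) (by simp), ?_⟩
  apply to_single_hom_ext
  rw [comp_f, mkHomToSingle_f, ← Category.assoc, ← Category.assoc, ← p_opcyclesMap,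
    Category.assoc (pOpcycles _ _), hψ]
  erw [pOpcycles_singleObjOpcyclesSelfIso_inv]
  simp

lemma exactAt_of_ext_sph (Y : CochainComplex 𝒜 ℤ) {m n : ℤ}
    (hmn : (ComplexShape.up ℤ).Rel m n) {A : 𝒜} (q : A ⟶ Y.cycles n) (hq : Epi q)
    (h : Ext1Zero ((single 𝒜 (ComplexShape.up ℤ) m).obj A) Y) : Y.ExactAt n := by
  rw [exactAt_iff_epi_toCycles' Y hmn]
  have hne : m ≠ n := by rintro rfl; simp at hmn
  obtain ⟨ψ, hψ⟩ := h.extend _ (disk_shortExact hmn A)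
    (mkHomFromSingle (q ≫ Y.iCycles n) (by simp))
  have h1 := congr_hom hψ n
  rw [comp_f] at h1
  dsimp only [diskI] at h1
  erw [mkHomFromSingle_f, mkHomFromSingle_f] at h1
  rw [Category.assoc, cancel_epi] at h1
  have h2 := ψ.comm m n
  rw [double_d _ _ hne] at h2
  have h3 : ((doubleXIso₀ (𝟙 A) hmn).inv ≫ ψ.f m) ≫ Y.toCycles m n = q := by
    rw [← cancel_mono (Y.iCycles n)]
    simp [h2, h1]
  rw [← h3] at hq
  exact epi_of_epi ((doubleXIso₀ (𝟙 A) hmn).inv ≫ ψ.f m) _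

lemma exactAt_of_ext_to_sph (X : CochainComplex 𝒜 ℤ) {m n : ℤ}
    (hmn : (ComplexShape.up ℤ).Rel m n) {B : 𝒜} (q : X.opcycles m ⟶ B) (hq : Mono q)
    (h : Ext1Zero X ((single 𝒜 (ComplexShape.up ℤ) n).obj B)) : X.ExactAt m := by
  rw [exactAt_iff_mono_fromOpcycles' X hmn]
  have hne : m ≠ n := by rintro rfl; simp at hmn
  obtain ⟨ψ, hψ⟩ := h.lift _ (disk_shortExact hmn B)
    (mkHomToSingle (X.pOpcycles m ≫ q) (by simp))
  have h1 := congr_hom hψ m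
  rw [comp_f] at h1
  dsimp only [diskP] at h1
  erw [mkHomToSingle_f, mkHomToSingle_f] at h1
  rw [← Category.assoc, cancel_mono] at h1
  have h2 := ψ.comm m n
  rw [double_d _ _ hne] at h2
  have h3 : X.fromOpcycles m n ≫ (ψ.f n ≫ (doubleXIso₁ (𝟙 B) hmn hne).hom) = q := by
    rw [← cancel_epi (X.pOpcycles m), ← h1, p_fromOpcycles_assoc, ← reassoc_of% h2]
    simp
  rw [← h3] at hq
  exact mono_of_mono _ (ψ.f n ≫ (doubleXIso₁ (𝟙 B) hmn hne).hom)

lemma ext_cycles_of_ext_sph (Y : CochainComplex 𝒜 ℤ) (n : ℤ) (A : 𝒜)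
    (h : Ext1Zero ((single 𝒜 (ComplexShape.up ℤ) n).obj A) Y) : Ext1Zero A (Y.cycles n) := by
  apply Ext1Zero.of_retraction
  intro E i p w hS
  obtain ⟨ψ, hψ⟩ := h.extend _ (sph_shortExact n w hS) (mkHomFromSingle (Y.iCycles n) (by simp))
  have h1 := congr_hom hψ n
  rw [comp_f, single_map_f_self] at h1
  erw [mkHomFromSingle_f] at h1
  rw [Category.assoc, cancel_epi, Category.assoc] at h1
  refine ⟨Y.liftCycles ((singleObjXSelf (ComplexShape.up ℤ) n E).inv ≫ ψ.f n) (n + 1)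
    (up_next n) ?_, ?_⟩
  · rw [Category.assoc, ψ.comm]
    erw [single_obj_d]
    simp
  · rw [← cancel_mono (Y.iCycles n)]
    simpa using h1

lemma ext_opcycles_of_ext_to_sph (X : CochainComplex 𝒜 ℤ) (n : ℤ) (B : 𝒜)
    (h : Ext1Zero X ((single 𝒜 (ComplexShape.up ℤ) n).obj B)) : Ext1Zero (X.opcycles n) B := by
  intro E i p w hS
  obtain ⟨ψ, hψ⟩ := h.lift _ (sph_shortExact n w hS) (mkHomToSingle (X.pOpcycles n) (by simp))
  have h1 := congr_hom hψ n
  rw [comp_f, single_map_f_self] at h1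
  erw [mkHomToSingle_f] at h1
  rw [← Category.assoc, ← Category.assoc, cancel_mono] at h1
  refine ⟨X.descOpcycles (ψ.f n ≫ (singleObjXSelf (ComplexShape.up ℤ) n E).hom) (n - 1)
    (up_prev n) ?_, ?_⟩
  · rw [← Category.assoc, ← ψ.comm]
    erw [single_obj_d]
    simp
  · rw [← cancel_epi (X.pOpcycles n)]
    simpa using h1

end Complexes

/-- Let `(𝓐, 𝓑)` be a cotorsion pair in an abelian category `𝒜` with `𝓐` generating
and `𝓑` cogenerating.  Then a cochain complex `Y` satisfies
`Ext¹(Sⁿ(A), Y) = 0` for all `A ∈ 𝓐` and `n ∈ ℤ` if and only if `Y ∈ B̃`; dually, a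
cochain complex `X` satisfies `Ext¹(X, Sⁿ(B)) = 0` for all `B ∈ 𝓑` and `n ∈ ℤ` if and
only if `X ∈ Ã`. -/
theorem stmt_13 (𝓐 𝓑 : Set 𝒜) (hpair : IsCotorsionPair 𝓐 𝓑)
    (hgen : ∀ X : 𝒜, ∃ A ∈ 𝓐, ∃ p : A ⟶ X, Epi p)
    (hcogen : ∀ X : 𝒜, ∃ B ∈ 𝓑, ∃ i : X ⟶ B, Mono i) :
    (∀ Y : CochainComplex 𝒜 ℤ,
      (∀ A ∈ 𝓐, ∀ n : ℤ, Ext1Zero (sph n A) Y) ↔ Y ∈ Tilde 𝓑) ∧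
    (∀ X : CochainComplex 𝒜 ℤ,
      (∀ B ∈ 𝓑, ∀ n : ℤ, Ext1Zero X (sph n B)) ↔ X ∈ Tilde 𝓐) := by
  have memB : ∀ B, B ∈ 𝓑 ↔ ∀ A ∈ 𝓐, Ext1Zero A B := fun B => by
    conv_lhs => rw [hpair.right_eq]
    rfl
  have memA : ∀ A, A ∈ 𝓐 ↔ ∀ B ∈ 𝓑, Ext1Zero A B := fun A => by
    conv_lhs => rw [hpair.left_eq]
    rfl
  have rel : ∀ n : ℤ, (ComplexShape.up ℤ).Rel n (n + 1) := fun n => rfl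
  have rel' : ∀ n : ℤ, (ComplexShape.up ℤ).Rel (n - 1) n := fun n => by simp
  refine ⟨fun Y => ⟨fun h => ?_, fun h A hA n => ?_⟩, fun X => ⟨fun h => ?_, fun h B hB n => ?_⟩⟩
  · have hex : ∀ n, Y.ExactAt n := fun n => by
      obtain ⟨A, hA, q, hq⟩ := hgen (Y.cycles n)
      exact exactAt_of_ext_sph Y (rel' n) q hq (h A hA _)
    have hcyc : ∀ n, Y.cycles n ∈ 𝓑 := fun n =>
      (memB _).2 fun A hA => ext_cycles_of_ext_sph Y n A (h A hA n)
    refine ⟨hex, fun n => (memB _).2 fun A hA => ?_, hcyc⟩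
    exact Ext1Zero.ext_right ((memB _).1 (hcyc n) A hA) ((memB _).1 (hcyc (n + 1)) A hA) _
      (cycles_shortExact Y (rel n) (hex _))
  · exact ext_sph_of_exact Y A n (h.1 _) ((memB _).1 (h.2.2 n) A hA)
  · have hex : ∀ n, X.ExactAt n := fun n => by
      obtain ⟨B, hB, q, hq⟩ := hcogen (X.opcycles n)
      exact exactAt_of_ext_to_sph X (rel n) q hq (h B hB _)
    have hcyc : ∀ n, X.cycles n ∈ 𝓐 := fun n => (memA _).2 fun B hB => by
      obtain ⟨e⟩ := opcycles_iso_cycles X (rel' n) (hex _) (hex _)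
      exact (ext_opcycles_of_ext_to_sph X (n - 1) B (h B hB _)).of_iso_left e
    refine ⟨hex, fun n => (memA _).2 fun B hB => ?_, hcyc⟩
    exact Ext1Zero.ext_left ((memA _).1 (hcyc n) B hB) ((memA _).1 (hcyc (n + 1)) B hB) _
      (cycles_shortExact X (rel n) (hex _))
  · obtain ⟨e⟩ := opcycles_iso_cycles X (rel n) (h.1 _) (h.1 _)
    exact ext_to_sph_of_exact X B n (h.1 _)
      (((memA _).1 (h.2.2 (n + 1)) B hB).of_iso_left e.symm)
end
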